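/- Work in ℂ², with standard basis vectors e₀, e₁; for a rational x let Z^x denote the 2×2 diagonal matrix diag(1, exp(iπx)); let |+⟩ = (e₀ + e₁)/√2 and |+_i⟩ = (e₀ + i·e₁)/√2. Let b_1, …, b_m and v_1, …, v_m be elements of {0,1}, set x = Σ_{j=1}^m (v_j − b_j/2) and S = Σ_{j=1}^m b_j. Then: (a) if S is even, Z^x |+⟩ = Z^w |+⟩ where w = (v_1 XOR ⋯ XOR v_m) XOR ((S mod 4)/2) ∈ {0,1}; (b) if S is odd, Z^x |+⟩ = Z^{w'} |+_i⟩ where w' = (v_1 XOR ⋯ XOR v_m) XOR (((1 + (S mod 4))/2) mod 2) ∈ {0,1}. -/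

import Mathlib

/-! The map `x ↦ Z^x` is a homomorphism with `Z² = 1`, so an integer exponent matters only modulo
`2`, where subtraction is addition. Put `V = ∑ j, v j`. If `S = 2k`, then
`Z^(V - S/2) = Z^(V - k) = Z^(V + k)`. If `S = 2k - 1`, then `Z^(V - S/2) = Z^(V + k) Z^(1/2)`, and
`Z^(1/2)` carries `|+⟩` to `|+_i⟩`. -/

open Matrix

/-- The single-qubit gate `Z^x = diag(1, exp(iπx))` for a rational exponent `x`. -/
noncomputable def Zpow (x : ℚ) : Matrix (Fin 2) (Fin 2) ℂ :=
  Matrix.diagonal ![1, Complex.exp (Real.pi * (x : ℂ) * Complex.I)]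

/-- The state `|+⟩ = (e₀ + e₁)/√2`. -/
noncomputable def ketPlus : Fin 2 → ℂ := ![1 / (Real.sqrt 2 : ℂ), 1 / (Real.sqrt 2 : ℂ)]

/-- The state `|+_i⟩ = (e₀ + i e₁)/√2`. -/
noncomputable def ketPlusI : Fin 2 → ℂ :=
  ![1 / (Real.sqrt 2 : ℂ), Complex.I / (Real.sqrt 2 : ℂ)]

theorem Zpow_add (x y : ℚ) : Zpow (x + y) = Zpow x * Zpow y := by
  have exp_add_phase : Complex.exp (Real.pi * ((x + y : ℚ) : ℂ) * Complex.I) =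
      Complex.exp (Real.pi * (x : ℂ) * Complex.I) *
        Complex.exp (Real.pi * (y : ℂ) * Complex.I) := by
    rw [← Complex.exp_add, Rat.cast_add, mul_add, add_mul]
  rw [Zpow, Zpow, Zpow, diagonal_mul_diagonal, exp_add_phase]
  congr 1
  ext i
  fin_cases i <;> simp

theorem Zpow_two : Zpow 2 = 1 := by
  have exp_two_phase : Complex.exp (Real.pi * ((2 : ℚ) : ℂ) * Complex.I) = 1 := by
    rw [Rat.cast_ofNat, mul_comm (Real.pi : ℂ), Complex.exp_two_pi_mul_I]
  rw [Zpow, exp_two_phase, ← diagonal_one]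
  congr 1
  ext i
  fin_cases i <;> rfl

theorem Zpow_periodic : Function.Periodic Zpow 2 := fun x => by
  rw [Zpow_add, Zpow_two, mul_one]

theorem Zpow_intCast_congr {a b : ℤ} (h : a ≡ b [ZMOD 2]) : Zpow a = Zpow b := by
  obtain ⟨n, hn⟩ := h.symm.dvd
  have a_eq : a = b + n * 2 := by linarith
  rw [a_eq, Int.cast_add, Int.cast_mul, Int.cast_ofNat, Zpow_periodic.int_mul n]

theorem Zpow_half_mulVec_ketPlus : Zpow (1 / 2) *ᵥ ketPlus = ketPlusI := by
  have exp_half_phase : Complex.exp (Real.pi * ((1 / 2 : ℚ) : ℂ) * Complex.I) = Complex.I := by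
    convert Complex.exp_pi_div_two_mul_I using 2
    push_cast
    ring
  ext i
  rw [Zpow, mulVec_diagonal, exp_half_phase]
  fin_cases i <;> simp [ketPlus, ketPlusI, div_eq_mul_inv]

theorem Zpow_sub_half_of_even (V : ℤ) {S : ℤ} (hS : Even S) :
    Zpow (V - S / 2) = Zpow ((V + S % 4 / 2) % 2 : ℤ) := by
  obtain ⟨k, rfl⟩ := even_iff_exists_two_mul.mp hS
  have exponent_eq : (V - (2 * k : ℤ) / 2 : ℚ) = (V - k : ℤ) := by
    push_cast
    ring
  have exponent_modEq : V - k ≡ (V + 2 * k % 4 / 2) % 2 [ZMOD 2] := by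
    rw [Int.ModEq]
    omega
  rw [exponent_eq, Zpow_intCast_congr exponent_modEq]

theorem Zpow_sub_half_of_odd (V : ℤ) {S : ℤ} (hS : Odd S) :
    Zpow (V - S / 2) = Zpow ((V + (1 + S % 4) / 2 % 2) % 2 : ℤ) * Zpow (1 / 2) := by
  obtain ⟨k, rfl⟩ : ∃ k, S = 2 * k - 1 := by
    obtain ⟨l, rfl⟩ := hS
    exact ⟨l + 1, by ring⟩
  have exponent_eq : (V - (2 * k - 1 : ℤ) / 2 : ℚ) = (V - k : ℤ) + 1 / 2 := by
    push_cast
    ring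
  have exponent_modEq : V - k ≡ (V + (1 + (2 * k - 1) % 4) / 2 % 2) % 2 [ZMOD 2] := by
    rw [Int.ModEq]
    omega
  rw [exponent_eq, Zpow_add, Zpow_intCast_congr exponent_modEq]

theorem state_evolution_general {ι : Type*} (s : Finset ι) (b v : ι → ℤ) :
    ((∑ j ∈ s, b j) % 2 = 0 →
      Zpow (∑ j ∈ s, ((v j : ℚ) - (b j : ℚ) / 2)) *ᵥ ketPlus =
        Zpow ((∑ j ∈ s, v j + (∑ j ∈ s, b j) % 4 / 2) % 2 : ℤ) *ᵥ ketPlus) ∧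
    ((∑ j ∈ s, b j) % 2 = 1 →
      Zpow (∑ j ∈ s, ((v j : ℚ) - (b j : ℚ) / 2)) *ᵥ ketPlus =
        Zpow ((∑ j ∈ s, v j + (1 + (∑ j ∈ s, b j) % 4) / 2 % 2) % 2 : ℤ) *ᵥ ketPlusI) := by
  have sum_exponents : ∑ j ∈ s, ((v j : ℚ) - (b j : ℚ) / 2) =
      (∑ j ∈ s, v j : ℤ) - (∑ j ∈ s, b j : ℤ) / 2 := by
    rw [Finset.sum_sub_distrib, ← Finset.sum_div, Int.cast_sum, Int.cast_sum]
  rw [sum_exponents]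
  constructor
  · intro hS
    rw [Zpow_sub_half_of_even _ (Int.even_iff.mpr hS)]
  · intro hS
    rw [Zpow_sub_half_of_odd _ (Int.odd_iff.mpr hS), ← mulVec_mulVec, Zpow_half_mulVec_ketPlus]

/-- State evolution in the noiseless prepare-and-measure protocol:
with `x = ∑_j (v_j - b_j/2)` and `S = ∑_j b_j`, the state `Z^x |+⟩` equals
`Z^w |+⟩` with `w = (⊕_j v_j) ⊕ ((S mod 4)/2)` when `S` is even, and
`Z^{w'} |+_i⟩` with `w' = (⊕_j v_j) ⊕ (((1 + S mod 4)/2) mod 2)` when `S` is odd. -/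
theorem state_evolution (m : ℕ) (b v : Fin m → ℕ) (hb : ∀ j, b j ≤ 1) (hv : ∀ j, v j ≤ 1) :
    ((∑ j, b j) % 2 = 0 →
      (Zpow (∑ j, ((v j : ℚ) - (b j : ℚ) / 2))).mulVec ketPlus =
        (Zpow ((((∑ j, v j) + ((∑ j, b j) % 4) / 2) % 2 : ℕ) : ℚ)).mulVec ketPlus) ∧
    ((∑ j, b j) % 2 = 1 →
      (Zpow (∑ j, ((v j : ℚ) - (b j : ℚ) / 2))).mulVec ketPlus =
        (Zpow ((((∑ j, v j) + ((1 + (∑ j, b j) % 4) / 2) % 2) % 2 : ℕ) : ℚ)).mulVec ketPlusI) := by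
  simp_rw [← Int.cast_natCast (R := ℚ)]
  exact_mod_cast state_evolution_general Finset.univ (fun j => (b j : ℤ)) (fun j => (v j : ℤ))
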